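/- Let J_ℝ ⊆ I_ℝ be ideals in ℝ[x] = ℝ[x₁,…,xₙ] such that dim_ℝ ℝ[x]/(J_ℝ:I_ℝ) < ∞ and (J_ℝ:I_ℝ) + I_ℝ = ℝ[x], and let J_ℂ, I_ℂ ⊆ ℂ[x] be their complexifications. Write V(J_ℂ) \ V(I_ℂ) = {p₁,…,p_m} ∪ {q₁, q̄₁, …, q_r, q̄_r}, where p₁,…,p_m are the real points and q₁, q̄₁, …, q_r, q̄_r are the non-real points, which come in complex-conjugate pairs. Then for all sufficiently large positive integers k, the homomorphism sending f ∈ ℝ[x] to the tuple of its residue classes induces an isomorphism of ℝ-algebras ℝ[x]/(J_ℝ:I_ℝ) ≅ (∏_{i=1}^{m} ℝ[x]/(J_ℝ + m_{ℝ,pᵢ}ᵏ)) × (∏_{j=1}^{r} ℂ[x]/(J_ℂ + m_{ℂ,q_j}ᵏ)), where each complex factor is regarded as an ℝ-algebra. -/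

import Mathlib

set_option synthInstance.maxHeartbeats 1000000
set_option maxHeartbeats 1000000

open MvPolynomial

/-- The coefficient inclusion `ℝ[x₁,…,xₙ] ↪ ℂ[x₁,…,xₙ]`. -/
noncomputable def realToComplex (n : ℕ) :
    MvPolynomial (Fin n) ℝ →+* MvPolynomial (Fin n) ℂ :=
  MvPolynomial.map (algebraMap ℝ ℂ)

/-- The zero set `V(S)` of an ideal of `ℂ[x₁,…,xₙ]`. -/
def zeroSetC {n : ℕ} (S : Ideal (MvPolynomial (Fin n) ℂ)) : Set (Fin n → ℂ) :=
  {p | ∀ f ∈ S, eval p f = 0}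

/-- For `p ∈ ℝⁿ`, the ideal `m_{ℝ,p}` of real polynomials vanishing at `p`. -/
noncomputable def mR {n : ℕ} (p : Fin n → ℝ) : Ideal (MvPolynomial (Fin n) ℝ) :=
  RingHom.ker (eval p : MvPolynomial (Fin n) ℝ →+* ℝ)

/-- For `q ∈ ℂⁿ`, the ideal `m_{ℂ,q}` of complex polynomials vanishing at `q`. -/
noncomputable def mC {n : ℕ} (q : Fin n → ℂ) : Ideal (MvPolynomial (Fin n) ℂ) :=
  RingHom.ker (eval q : MvPolynomial (Fin n) ℂ →+* ℂ)

/-!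
Write `Q = J : I`, so that `Q I ⊆ J ⊆ Q`. Since `Q + I = (1)`, the zeros of `Q_ℂ` lie in
`V(J_ℂ) \ V(I_ℂ)`. At a point `x` of this finite set `I` is comaximal with `m_x`, whence
`Q ⊆ J + m_xᵏ` for every `k`. By the Nullstellensatz and the Chinese remainder theorem `Q_ℂ` is the
intersection of the ideals `Q_ℂ + m_xᵏ` once `k` is large. A real polynomial lying in
`Q_ℂ + m_qᵏ` also lies in its conjugate `Q_ℂ + m_q̄ᵏ`, and `Q_ℂ ∩ ℝ[x] = Q` by faithful flatness, so
the kernel of the map to the product of local quotients is `Q`. For surjectivity, solve the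
congruences over `ℂ` with the conjugate data at the points `q̄`, and take the real part of the
solution.
-/

section CommRing

variable {R : Type*} [CommRing R]

lemma le_sup_pow_of_mul_le {I J Q M : Ideal R} (hQI : Q * I ≤ J) (hIM : I ⊔ M = ⊤) (k : ℕ) :
    Q ≤ J ⊔ M ^ k :=
  calc
    Q = Q * I ⊔ Q * M ^ k := by rw [← Ideal.mul_sup, Ideal.sup_pow_eq_top hIM, Ideal.mul_top]
    _ ≤ J ⊔ M ^ k := sup_le_sup hQI Ideal.mul_le_right

lemma colon_mul_le (J I : Ideal R) : J.colon I * I ≤ J :=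
  Ideal.mul_le.2 fun _ hf _ hg => Submodule.mem_colon.1 hf _ hg

lemma prod_sup_le_sup_prod {ι : Type*} (Q : Ideal R) (M : ι → Ideal R) (s : Finset ι) :
    ∏ i ∈ s, (Q ⊔ M i) ≤ Q ⊔ ∏ i ∈ s, M i := by
  induction s using Finset.cons_induction with
  | empty => simp
  | cons i s hi ih =>
    simp only [Finset.prod_cons]
    calc
      (Q ⊔ M i) * ∏ j ∈ s, (Q ⊔ M j) ≤ (Q ⊔ M i) * (Q ⊔ ∏ j ∈ s, M j) := Ideal.mul_mono_right ih
      _ = Q * (Q ⊔ ∏ j ∈ s, M j) ⊔ (M i * Q ⊔ M i * ∏ j ∈ s, M j) := by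
        rw [Ideal.sup_mul, Ideal.mul_sup (M i)]
      _ ≤ Q ⊔ M i * ∏ j ∈ s, M j :=
        sup_le (Ideal.mul_le_left.trans le_sup_left) (sup_le_sup Ideal.mul_le_right le_rfl)

lemma iInf_sup_eq_of_prod_le {ι : Type*} [Fintype ι] {Q : Ideal R} {M : ι → Ideal R}
    (hM : Pairwise (Function.onFun IsCoprime M)) (hQ : ∏ i, M i ≤ Q) : ⨅ i, (Q ⊔ M i) = Q := by
  have hcoprime : Pairwise (Function.onFun IsCoprime fun i => Q ⊔ M i) := fun i j hij =>
    Ideal.isCoprime_iff_sup_eq.2 <| top_unique <|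
      (Ideal.isCoprime_iff_sup_eq.1 (hM hij)).ge.trans (sup_le_sup le_sup_right le_sup_right)
  refine le_antisymm ?_ (le_iInf fun _ => le_sup_left)
  calc
    ⨅ i, (Q ⊔ M i) = ∏ i, (Q ⊔ M i) := by
      simpa using (Ideal.prod_eq_iInf_of_pairwise_isCoprime (s := .univ)
        (hcoprime.set_pairwise _)).symm
    _ ≤ Q ⊔ ∏ i, M i := prod_sup_le_sup_prod Q M _
    _ ≤ Q := sup_le le_rfl hQ

lemma exists_forall_iInf_sup_pow_eq [IsNoetherianRing R] {ι : Type*} [Finite ι] {Q : Ideal R}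
    {M : ι → Ideal R} (hM : Pairwise (Function.onFun IsCoprime M)) (hQ : ⨅ i, M i ≤ Q.radical) :
    ∃ K : ℕ, ∀ k, K ≤ k → ⨅ i, (Q ⊔ M i ^ k) = Q := by
  have := Fintype.ofFinite ι
  obtain ⟨K, hK⟩ := Ideal.exists_pow_le_of_le_radical_of_fg hQ (IsNoetherian.noetherian _)
  refine ⟨K, fun k hk => iInf_sup_eq_of_prod_le (fun i j hij => (hM hij).pow) ?_⟩
  calc
    ∏ i, M i ^ k = (∏ i, M i) ^ k := Finset.prod_pow _ _ _
    _ ≤ (⨅ i, M i) ^ k :=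
      Ideal.pow_right_mono (Ideal.prod_le_inf.trans_eq (Finset.inf_univ_eq_iInf _)) k
    _ ≤ (⨅ i, M i) ^ K := Ideal.pow_le_pow_right hk
    _ ≤ Q := hK

end CommRing

section MvPolynomial

variable {σ : Type*}

lemma isMaximal_ker_eval {k : Type*} [Field k] (x : σ → k) :
    (RingHom.ker (eval x : MvPolynomial σ k →+* k)).IsMaximal :=
  RingHom.ker_isMaximal_of_surjective _ fun c => ⟨C c, eval_C c⟩

lemma ker_eval_injective {R : Type*} [CommRing R] :
    Function.Injective fun x : σ → R => RingHom.ker (eval x : MvPolynomial σ R →+* R) := by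
  refine fun x y hxy => funext fun t => ?_
  have hmem : X t - C (x t) ∈ RingHom.ker (eval y) := hxy.le (by simp [RingHom.mem_ker])
  simpa [RingHom.mem_ker, sub_eq_zero, eq_comm] using hmem

lemma pairwise_isCoprime_ker_eval {k ι : Type*} [Field k] {x : ι → σ → k}
    (hx : Function.Injective x) :
    Pairwise (Function.onFun IsCoprime
      fun i => RingHom.ker (eval (x i) : MvPolynomial σ k →+* k)) := by
  intro i j hij
  have := isMaximal_ker_eval (x i)
  have := isMaximal_ker_eval (x j)
  exact Ideal.isCoprime_of_isMaximal (ker_eval_injective.ne (hx.ne hij))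

lemma sup_ker_eval_eq_top {k : Type*} [Field k] {S : Ideal (MvPolynomial σ k)} {x : σ → k}
    (hx : ¬ S ≤ RingHom.ker (eval x)) : S ⊔ RingHom.ker (eval x) = ⊤ :=
  (isMaximal_ker_eval x).out.lt_iff.1 (right_lt_sup.2 hx)

lemma iInf_ker_eval_le_radical {k : Type*} [Field k] [IsAlgClosed k] [Finite σ] {ι : Type*}
    {Q : Ideal (MvPolynomial σ k)} {x : ι → σ → k} (hQ : zeroLocus k Q ⊆ Set.range x) :
    ⨅ i, RingHom.ker (eval (x i) : MvPolynomial σ k →+* k) ≤ Q.radical := by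
  rw [← vanishingIdeal_zeroLocus_eq_radical (K := k) Q]
  intro f hf y hy
  obtain ⟨i, rfl⟩ := hQ hy
  exact Ideal.mem_iInf.1 hf i

lemma map_ker_eval {R S : Type*} [CommRing R] [CommRing S] (φ : R →+* S) (x : σ → R) :
    (RingHom.ker (eval x : MvPolynomial σ R →+* R)).map (MvPolynomial.map φ) =
      RingHom.ker (eval (φ ∘ x) : MvPolynomial σ S →+* S) := by
  refine le_antisymm (Ideal.map_le_iff_le_comap.2 fun f hf => ?_) fun F hF => ?_
  · rw [Ideal.mem_comap, RingHom.mem_ker, ← map_eval, RingHom.mem_ker.1 hf, map_zero]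
  · suffices hsub : F - C (eval (φ ∘ x) F) ∈ (RingHom.ker (eval x)).map (MvPolynomial.map φ) by
      simpa [RingHom.mem_ker.1 hF] using hsub
    clear hF
    induction F using MvPolynomial.induction_on with
    | C a => simp
    | add F G hF hG =>
      convert add_mem hF hG using 1
      simp only [map_add]
      ring
    | mul_X F t hF =>
      have ht : X t - C (φ (x t)) ∈ (RingHom.ker (eval x)).map (MvPolynomial.map φ) := by
        simpa using Ideal.mem_map_of_mem (MvPolynomial.map φ)
          (show X t - C (x t) ∈ RingHom.ker (eval x) by simp [RingHom.mem_ker])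
      convert add_mem (Ideal.mul_mem_right (X t) _ hF)
        (Ideal.mul_mem_left _ (C (eval (φ ∘ x) F)) ht) using 1
      simp only [map_mul, eval_X, Function.comp_apply]
      ring

attribute [local instance] algebraMvPolynomial in
lemma comap_map_map_algebraMap {k A : Type*} [Field k] [CommRing A] [Nontrivial A] [Algebra k A]
    (S : Ideal (MvPolynomial σ k)) :
    (S.map (MvPolynomial.map (algebraMap k A))).comap (MvPolynomial.map (algebraMap k A)) = S := by
  have : Module.Free (MvPolynomial σ k) (MvPolynomial σ A) :=
    .of_equiv (Algebra.IsPushout.equiv k (MvPolynomial σ k) A (MvPolynomial σ A)).toLinearEquiv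
  exact Ideal.comap_map_eq_self_of_faithfullyFlat S

end MvPolynomial

section Conjugation

variable {n : ℕ}

/-- Complex conjugation of the coefficients of a polynomial in `ℂ[x₁,…,xₙ]`; its fixed ring is
`ℝ[x₁,…,xₙ]`. -/
noncomputable def conjCoeffs (n : ℕ) : MvPolynomial (Fin n) ℂ →+* MvPolynomial (Fin n) ℂ :=
  MvPolynomial.map (starRingEnd ℂ)

lemma conjCoeffs_comp_realToComplex : (conjCoeffs n).comp (realToComplex n) = realToComplex n := by
  ext <;> simp [conjCoeffs, realToComplex]

lemma conjCoeffs_conjCoeffs (F : MvPolynomial (Fin n) ℂ) : conjCoeffs n (conjCoeffs n F) = F := by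
  have hcomp : (starRingEnd ℂ).comp (starRingEnd ℂ) = .id ℂ := RingHom.ext star_star
  rw [conjCoeffs, MvPolynomial.map_map, hcomp, MvPolynomial.map_id]

lemma exists_two_mul_realToComplex_eq (F : MvPolynomial (Fin n) ℂ) :
    ∃ f, 2 * realToComplex n f = F + conjCoeffs n F := by
  induction F using MvPolynomial.induction_on with
  | C a =>
    refine ⟨C a.re, ?_⟩
    simp only [realToComplex, conjCoeffs, map_C, Complex.coe_algebraMap, ← C_add,
      Complex.add_conj, Complex.ofReal_mul, C_mul, Complex.ofReal_ofNat, map_ofNat]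
  | add F G hF hG =>
    obtain ⟨f, hf⟩ := hF
    obtain ⟨g, hg⟩ := hG
    exact ⟨f + g, by simp only [map_add]; linear_combination hf + hg⟩
  | mul_X F t hF =>
    obtain ⟨f, hf⟩ := hF
    refine ⟨f * X t, ?_⟩
    simp only [realToComplex, conjCoeffs, map_mul, map_X] at hf ⊢
    linear_combination X t * hf

lemma comap_map_realToComplex (S : Ideal (MvPolynomial (Fin n) ℝ)) :
    (S.map (realToComplex n)).comap (realToComplex n) = S :=
  comap_map_map_algebraMap S

lemma map_realToComplex_mR (x : Fin n → ℝ) :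
    (mR x).map (realToComplex n) = mC (Complex.ofReal ∘ x) :=
  map_ker_eval Complex.ofRealHom x

lemma realToComplex_mem_mC_ofReal_pow {f : MvPolynomial (Fin n) ℝ} {x : Fin n → ℝ} {k : ℕ} :
    realToComplex n f ∈ mC (Complex.ofReal ∘ x) ^ k ↔ f ∈ mR x ^ k := by
  rw [← map_realToComplex_mR, ← Ideal.map_pow, ← Ideal.mem_comap, comap_map_realToComplex]

lemma map_conjCoeffs_mC (x : Fin n → ℂ) : (mC x).map (conjCoeffs n) = mC (star x) :=
  map_ker_eval (starRingEnd ℂ) x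

lemma map_conjCoeffs_sup_mC_pow (S : Ideal (MvPolynomial (Fin n) ℝ)) (x : Fin n → ℂ) (k : ℕ) :
    (S.map (realToComplex n) ⊔ mC x ^ k).map (conjCoeffs n) =
      S.map (realToComplex n) ⊔ mC (star x) ^ k := by
  rw [Ideal.map_sup, Ideal.map_pow, map_conjCoeffs_mC, Ideal.map_map,
    conjCoeffs_comp_realToComplex]

end Conjugation

section LocalQuotients

variable {n : ℕ} {ι κ : Type*}

lemma zeroSetC_eq_zeroLocus (S : Ideal (MvPolynomial (Fin n) ℂ)) : zeroSetC S = zeroLocus ℂ S := by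
  simp only [zeroSetC, zeroLocus, aeval_eq_eval]

lemma sup_mR_eq_top {S : Ideal (MvPolynomial (Fin n) ℝ)} {x : Fin n → ℝ}
    (hx : Complex.ofReal ∘ x ∉ zeroSetC (S.map (realToComplex n))) : S ⊔ mR x = ⊤ := by
  refine sup_ker_eval_eq_top fun hS => hx fun f hf => ?_
  have hle := Ideal.map_mono (f := realToComplex n) hS
  exact (hle.trans_eq (map_realToComplex_mR x)) hf

lemma zeroSetC_map_subset_diff {I J Q : Ideal (MvPolynomial (Fin n) ℝ)} (hJQ : J ≤ Q)
    (hQI : Q ⊔ I = ⊤) :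
    zeroSetC (Q.map (realToComplex n)) ⊆
      zeroSetC (J.map (realToComplex n)) \ zeroSetC (I.map (realToComplex n)) := by
  refine fun x hxQ => ⟨fun f hf => hxQ f (Ideal.map_mono hJQ hf), fun hxI => ?_⟩
  refine (isMaximal_ker_eval x).ne_top (top_unique ?_)
  calc
    ⊤ = (Q ⊔ I).map (realToComplex n) := by rw [hQI, Ideal.map_top]
    _ = Q.map (realToComplex n) ⊔ I.map (realToComplex n) := Ideal.map_sup _ _ _
    _ ≤ RingHom.ker (eval x) := sup_le hxQ hxI

lemma exists_forall_mem_of_forall_mem_sup_mC_pow [Finite ι] {Q : Ideal (MvPolynomial (Fin n) ℝ)}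
    {x : ι → Fin n → ℂ} (hx : Function.Injective x)
    (hQ : zeroSetC (Q.map (realToComplex n)) ⊆ Set.range x) :
    ∃ K : ℕ, ∀ k, K ≤ k → ∀ f,
      (∀ i, realToComplex n f ∈ Q.map (realToComplex n) ⊔ mC (x i) ^ k) → f ∈ Q := by
  rw [zeroSetC_eq_zeroLocus] at hQ
  obtain ⟨K, hK⟩ := exists_forall_iInf_sup_pow_eq (pairwise_isCoprime_ker_eval hx)
    (iInf_ker_eval_le_radical hQ)
  refine ⟨K, fun k hk f hf => ?_⟩
  have hmem := (hK k hk).le (Ideal.mem_iInf.2 hf)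
  exact (comap_map_realToComplex Q).le hmem

lemma realToComplex_sub_mem_mC_pow {f : MvPolynomial (Fin n) ℝ} {F G : MvPolynomial (Fin n) ℂ}
    {x : Fin n → ℂ} {k : ℕ} (hf : 2 * realToComplex n f = F + conjCoeffs n F)
    (hG : F - G ∈ mC x ^ k) (hconj : F - conjCoeffs n G ∈ mC (star x) ^ k) :
    realToComplex n f - G ∈ mC x ^ k := by
  have hG' : conjCoeffs n F - G ∈ mC x ^ k := by
    have := Ideal.mem_map_of_mem (conjCoeffs n) hconj
    rwa [Ideal.map_pow, map_conjCoeffs_mC, star_star, map_sub, conjCoeffs_conjCoeffs] at this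
  have hhalf : (C (1 / 2) * 2 : MvPolynomial (Fin n) ℂ) = 1 := by
    rw [← map_ofNat C 2, ← C_mul]
    norm_num
  convert Ideal.mul_mem_left _ (C (1 / 2)) (add_mem hG hG') using 1
  linear_combination (G - realToComplex n f) * hhalf + C (1 / 2) * hf

/-- A family of real points and a family of complex points, completed by the conjugates of the
latter, as one family in `ℂⁿ`. -/
def withConjugates (p : ι → Fin n → ℝ) (q : κ → Fin n → ℂ) : ι ⊕ κ ⊕ κ → Fin n → ℂ :=
  Sum.elim (fun i => Complex.ofReal ∘ p i) (Sum.elim q (star q))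

lemma star_ofReal_comp (x : Fin n → ℝ) : star (Complex.ofReal ∘ x) = Complex.ofReal ∘ x :=
  funext fun t => Complex.conj_ofReal (x t)

lemma withConjugates_injective {p : ι → Fin n → ℝ} {q : κ → Fin n → ℂ}
    (hp : Function.Injective p) (hq : Function.Injective q) (hconj : ∀ j j', star (q j) ≠ q j') :
    Function.Injective (withConjugates p q) := by
  have hreal : ∀ i j, Complex.ofReal ∘ p i ≠ q j := fun i j h =>
    hconj j j (by rw [← h, star_ofReal_comp])
  refine (Complex.ofReal_injective.comp_left.comp hp).sumElim
    (hq.sumElim (star_injective.comp hq) fun j j' => (hconj j' j).symm) ?_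
  rintro i (j | j) h
  · exact hreal i j h
  · exact hreal i j (by
      rw [← star_ofReal_comp]
      exact star_eq_iff_star_eq.2 h.symm)

/-- The map sending a real polynomial to its classes modulo `J + m_{ℝ,pᵢ}ᵏ` and
`J_ℂ + m_{ℂ,q_j}ᵏ`. -/
noncomputable def toLocalQuotients (J : Ideal (MvPolynomial (Fin n) ℝ)) (p : ι → Fin n → ℝ)
    (q : κ → Fin n → ℂ) (k : ℕ) : MvPolynomial (Fin n) ℝ →ₐ[ℝ]
      (∀ i, MvPolynomial (Fin n) ℝ ⧸ (J + mR (p i) ^ k)) ×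
      (∀ j, MvPolynomial (Fin n) ℂ ⧸ (J.map (realToComplex n) + mC (q j) ^ k)) :=
  (AlgHom.pi fun _ => Ideal.Quotient.mkₐ ℝ _).prod
    (AlgHom.pi fun _ => (Ideal.Quotient.mkₐ ℝ _).comp (mapAlgHom (Algebra.ofId ℝ ℂ)))

variable {J : Ideal (MvPolynomial (Fin n) ℝ)} {p : ι → Fin n → ℝ} {q : κ → Fin n → ℂ}

lemma toLocalQuotients_apply (k : ℕ) (f : MvPolynomial (Fin n) ℝ) :
    toLocalQuotients J p q k f =
      (fun i => Ideal.Quotient.mk (J + mR (p i) ^ k) f,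
       fun j => Ideal.Quotient.mk (J.map (realToComplex n) + mC (q j) ^ k)
        (realToComplex n f)) :=
  rfl

lemma mem_ker_toLocalQuotients {k : ℕ} {f : MvPolynomial (Fin n) ℝ} :
    f ∈ RingHom.ker (toLocalQuotients J p q k) ↔
      (∀ i, f ∈ J ⊔ mR (p i) ^ k) ∧
        ∀ j, realToComplex n f ∈ J.map (realToComplex n) ⊔ mC (q j) ^ k := by
  simp only [RingHom.mem_ker, toLocalQuotients_apply, Prod.mk_eq_zero, funext_iff, Pi.zero_apply,
    Ideal.Quotient.eq_zero_iff_mem, Submodule.add_eq_sup]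

lemma le_ker_toLocalQuotients {I Q : Ideal (MvPolynomial (Fin n) ℝ)} (hQI : Q * I ≤ J)
    (hI : ∀ s, withConjugates p q s ∉ zeroSetC (I.map (realToComplex n))) (k : ℕ) :
    Q ≤ RingHom.ker (toLocalQuotients J p q k) := by
  have hQIC : Q.map (realToComplex n) * I.map (realToComplex n) ≤ J.map (realToComplex n) := by
    rw [← Ideal.map_mul]
    exact Ideal.map_mono hQI
  refine fun f hf => mem_ker_toLocalQuotients.2 ⟨fun i => ?_, fun j => ?_⟩
  · exact le_sup_pow_of_mul_le hQI (sup_mR_eq_top (hI (.inl i))) k hf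
  · exact le_sup_pow_of_mul_le hQIC (sup_ker_eval_eq_top (hI (.inr (.inl j)))) k
      (Ideal.mem_map_of_mem _ hf)

lemma mem_sup_mC_pow_of_mem_ker {k : ℕ} {f : MvPolynomial (Fin n) ℝ}
    (hf : f ∈ RingHom.ker (toLocalQuotients J p q k)) (s : ι ⊕ κ ⊕ κ) :
    realToComplex n f ∈ J.map (realToComplex n) ⊔ mC (withConjugates p q s) ^ k := by
  obtain ⟨hp, hq⟩ := mem_ker_toLocalQuotients.1 hf
  rcases s with i | j | j
  · have := Ideal.mem_map_of_mem (realToComplex n) (hp i)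
    rwa [Ideal.map_sup, Ideal.map_pow, map_realToComplex_mR] at this
  · exact hq j
  · have := Ideal.mem_map_of_mem (conjCoeffs n) (hq j)
    rwa [map_conjCoeffs_sup_mC_pow, ← RingHom.comp_apply, conjCoeffs_comp_realToComplex] at this

lemma exists_forall_ker_toLocalQuotients_le [Finite ι] [Finite κ]
    {Q : Ideal (MvPolynomial (Fin n) ℝ)} (hinj : Function.Injective (withConjugates p q))
    (hJQ : J ≤ Q)
    (hQ : zeroSetC (Q.map (realToComplex n)) ⊆ Set.range (withConjugates p q)) :
    ∃ K : ℕ, ∀ k, K ≤ k → RingHom.ker (toLocalQuotients J p q k) ≤ Q := by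
  obtain ⟨K, hK⟩ := exists_forall_mem_of_forall_mem_sup_mC_pow hinj hQ
  refine ⟨K, fun k hk f hf => hK k hk f fun s => ?_⟩
  exact SetLike.le_def.1 (sup_le_sup_right (Ideal.map_mono hJQ) _) (mem_sup_mC_pow_of_mem_ker hf s)

lemma toLocalQuotients_surjective [Finite ι] [Finite κ]
    (hinj : Function.Injective (withConjugates p q)) (k : ℕ) :
    Function.Surjective (toLocalQuotients J p q k) := by
  rintro ⟨u, v⟩
  choose g hg using fun i => Ideal.Quotient.mk_surjective (u i)
  choose G hG using fun j => Ideal.Quotient.mk_surjective (v j)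
  obtain ⟨F, hF⟩ := Ideal.exists_forall_sub_mem_ideal
    (I := fun s => mC (withConjugates p q s) ^ k)
    (fun s t hst => (pairwise_isCoprime_ker_eval hinj hst).pow)
    (Sum.elim (fun i => realToComplex n (g i)) (Sum.elim G fun j => conjCoeffs n (G j)))
  obtain ⟨f, hf⟩ := exists_two_mul_realToComplex_eq F
  refine ⟨f, Prod.ext (funext fun i => ?_) (funext fun j => ?_)⟩
  · refine Eq.trans (Ideal.Quotient.eq.2 (le_sup_right (a := J) ?_)) (hg i)
    rw [← realToComplex_mem_mC_ofReal_pow, map_sub]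
    refine realToComplex_sub_mem_mC_pow hf (hF (.inl i)) ?_
    rw [star_ofReal_comp, ← RingHom.comp_apply, conjCoeffs_comp_realToComplex]
    exact hF (.inl i)
  · refine Eq.trans (Ideal.Quotient.eq.2 (le_sup_right (a := J.map (realToComplex n)) ?_)) (hG j)
    exact realToComplex_sub_mem_mC_pow hf (hF (.inr (.inl j))) (hF (.inr (.inr j)))

end LocalQuotients

theorem stmt_11_general {n : ℕ} {ι κ : Type*} [Finite ι] [Finite κ]
    (J I : Ideal (MvPolynomial (Fin n) ℝ)) (hsum : J.colon I + I = ⊤)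
    (p : ι → Fin n → ℝ) (q : κ → Fin n → ℂ)
    (hpinj : Function.Injective p) (hqinj : Function.Injective q)
    (hqconj : ∀ j j', star (q j) ≠ q j')
    (hrange : zeroSetC (J.map (realToComplex n)) \ zeroSetC (I.map (realToComplex n)) =
      (Set.range fun i => Complex.ofReal ∘ p i) ∪ Set.range q ∪ Set.range (star q)) :
    ∃ K : ℕ, 0 < K ∧ ∀ k : ℕ, K ≤ k →
      ∃ e : (MvPolynomial (Fin n) ℝ ⧸ J.colon I) ≃ₐ[ℝ]
          (∀ i, MvPolynomial (Fin n) ℝ ⧸ (J + mR (p i) ^ k)) ×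
          (∀ j, MvPolynomial (Fin n) ℂ ⧸ (J.map (realToComplex n) + mC (q j) ^ k)),
        ∀ f : MvPolynomial (Fin n) ℝ,
          e (Ideal.Quotient.mk (J.colon I) f) =
            (fun i => Ideal.Quotient.mk (J + mR (p i) ^ k) f,
             fun j => Ideal.Quotient.mk (J.map (realToComplex n) + mC (q j) ^ k)
               (realToComplex n f)) := by
  have hinj := withConjugates_injective hpinj hqinj hqconj
  rw [Set.union_assoc, ← Set.Sum.elim_range, ← Set.Sum.elim_range] at hrange
  have hI (s) : withConjugates p q s ∉ zeroSetC (I.map (realToComplex n)) :=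
    (hrange.ge (Set.mem_range_self s)).2
  obtain ⟨K, hK⟩ := exists_forall_ker_toLocalQuotients_le hinj Ideal.le_colon
    ((zeroSetC_map_subset_diff Ideal.le_colon hsum).trans hrange.le)
  refine ⟨K + 1, K.succ_pos, fun k hk => ?_⟩
  have hker : J.colon I = RingHom.ker (toLocalQuotients J p q k) :=
    le_antisymm (le_ker_toLocalQuotients (colon_mul_le J I) hI k) (hK k (Nat.le_of_succ_le hk))
  exact ⟨(Ideal.quotientEquivAlgOfEq ℝ hker).trans
    (Ideal.quotientKerAlgEquivOfSurjective (toLocalQuotients_surjective hinj k)), fun _ => rfl⟩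

/-- Theorem 11: with `V(J_ℂ) \ V(I_ℂ) = {p₁,…,p_m} ∪ {q₁,q̄₁,…,q_r,q̄_r}`
(`pᵢ` real, `q_j` non-real, coming in conjugate pairs), for all large `k` the
natural map induces an `ℝ`-algebra isomorphism
`ℝ[x]/(J_ℝ:I_ℝ) ≅ (∏ᵢ ℝ[x]/(J_ℝ + m_{ℝ,pᵢ}ᵏ)) × (∏ⱼ ℂ[x]/(J_ℂ + m_{ℂ,q_j}ᵏ))`. -/
theorem stmt_11 {n : ℕ} (JR IR : Ideal (MvPolynomial (Fin n) ℝ)) (hJI : JR ≤ IR)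
    (hfin : FiniteDimensional ℝ (MvPolynomial (Fin n) ℝ ⧸ JR.colon IR))
    (hsum : JR.colon IR + IR = ⊤)
    (m r : ℕ) (p : Fin m → (Fin n → ℝ)) (q : Fin r → (Fin n → ℂ))
    (hpinj : Function.Injective p) (hqinj : Function.Injective q)
    (hqconj : ∀ j j' : Fin r, (fun t => starRingEnd ℂ (q j t)) ≠ q j')
    (hrange :
      zeroSetC (Ideal.map (realToComplex n) JR) \
          zeroSetC (Ideal.map (realToComplex n) IR) =
        (Set.range fun i => fun t => ((p i t : ℝ) : ℂ)) ∪ Set.range q ∪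
          Set.range fun j => fun t => starRingEnd ℂ (q j t)) :
    ∃ K : ℕ, 0 < K ∧ ∀ k : ℕ, K ≤ k →
      ∃ e : (MvPolynomial (Fin n) ℝ ⧸ JR.colon IR) ≃ₐ[ℝ]
          (∀ i : Fin m, MvPolynomial (Fin n) ℝ ⧸ (JR + mR (p i) ^ k)) ×
          (∀ j : Fin r,
            MvPolynomial (Fin n) ℂ ⧸ (Ideal.map (realToComplex n) JR + mC (q j) ^ k)),
        ∀ f : MvPolynomial (Fin n) ℝ,
          e (Ideal.Quotient.mk (JR.colon IR) f) =
            (fun i => Ideal.Quotient.mk (JR + mR (p i) ^ k) f,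
             fun j => Ideal.Quotient.mk (Ideal.map (realToComplex n) JR + mC (q j) ^ k)
               (realToComplex n f)) := by
  exact stmt_11_general JR IR hsum p q hpinj hqinj hqconj hrange
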